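/- arXiv:2008.08499 — 2 statements merged into one kernel-verified Lean document; each statement's English description precedes it below -/
import Mathlib

section
/- Let V be a finite type and let G and H be simple graphs on V that are fractionally isomorphic, i.e., there exists a doubly stochastic matrix S indexed by V with A_G * S = S * A_H, where A_G, A_H are the real adjacency matrices. Define the fractional matching number μ_f(G) as the supremum (in ℝ) of { t | ∃ y : E(G) → ℝ, (∀ e, 0 ≤ y e) ∧ (∀ v : V, the sum of y e over edges e of G containing v is ≤ 1) ∧ t = ∑ over e of y e }, and the fractional edge cover number k_f(G) as the infimum of { t | ∃ y : E(G) → ℝ, (∀ e, 0 ≤ y e) ∧ (∀ v : V, the sum of y e over edges e of G containing v is ≥ 1) ∧ t = ∑ over e of y e }. Then μ_f(G) = μ_f(H) — in particular, G has a perfect fractional matching (μ_f(G) = |V|/2) if and only if H does — and, if G has no isolated vertices, k_f(G) = k_f(H). -/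
/-!
The doubly stochastic matrix `S` induces a common colouring of `V(G)` and `V(H)`: glue a vertex `a`
of `G` to a vertex `u` of `H` whenever `S a u ≠ 0`, and let the colours be the classes of the
generated equivalence relation on `V ⊕ V`. Since `S` is doubly stochastic, each colour is used
equally often in `G` and in `H` (`sum_color_eq`). Moreover the number of `j`-coloured neighbours
of a vertex depends only on its colour, in the same way for `G` and for `H`: if `p` and `q` are the
vectors of these numbers in `G` and `H`, then `p = S q` and `q = Sᵀ p`, which forces
`∑ S a u (p a - q u)² = 0`, so `p a = q u` as soon as `S a u ≠ 0` (`eq_of_stochastic`).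

Given edge weights on `G`, take the total weight between the colour classes `i` and `j` and spread
it evenly over the edges of `H` between these classes. The load at a vertex of `H` is then the
average load over the vertices of `G` of the same colour (`exists_averaged_weight`). Hence the
bounds "load `≤ 1`" and "load `≥ 1`" and the total weight survive (`exists_transfer`). As the
situation is symmetric in `G` and `H`, the two linear programs take the same set of values on both
graphs. No appeal to linear programming duality is needed.
-/

open Matrix

/-- A real square matrix is doubly stochastic if all its entries are nonnegative and
each of its rows and each of its columns sums to 1. -/
def DoublyStochastic {n : Type*} [Fintype n] (S : Matrix n n ℝ) : Prop :=
  (∀ i j, 0 ≤ S i j) ∧ (∀ i, ∑ j, S i j = 1) ∧ (∀ j, ∑ i, S i j = 1)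

/-- The fractional matching number of a simple graph. -/
noncomputable def fracMatchingNumber {V : Type*} [Fintype V] [DecidableEq V]
    (G : SimpleGraph V) [DecidableRel G.Adj] : ℝ :=
  sSup { t : ℝ | ∃ y : G.edgeSet → ℝ, (∀ e, 0 ≤ y e) ∧
    (∀ v : V, ∑ e : G.edgeSet, (if v ∈ (e : Sym2 V) then y e else 0) ≤ 1) ∧
    t = ∑ e : G.edgeSet, y e }

/-- The fractional edge cover number of a simple graph. -/
noncomputable def fracEdgeCoverNumber {V : Type*} [Fintype V] [DecidableEq V]
    (G : SimpleGraph V) [DecidableRel G.Adj] : ℝ :=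
  sInf { t : ℝ | ∃ y : G.edgeSet → ℝ, (∀ e, 0 ≤ y e) ∧
    (∀ v : V, 1 ≤ ∑ e : G.edgeSet, (if v ∈ (e : Sym2 V) then y e else 0)) ∧
    t = ∑ e : G.edgeSet, y e }

section FracIso

universe u

variable {V : Type u} [Fintype V]

/-! ### Vertex loads of edge weights -/

/-- The load at `v` of the edge weights `f`, written as a sum over the neighbours of `v`. The
weights are given on all of `Sym2 V`; only their values on edges of `G` matter. -/
def load (G : SimpleGraph V) [DecidableRel G.Adj] (f : Sym2 V → ℝ) (v : V) : ℝ :=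
  ∑ b, if G.Adj v b then f s(v, b) else 0

lemma sum_edges_eq_load [DecidableEq V] (G : SimpleGraph V) [DecidableRel G.Adj]
    (f : Sym2 V → ℝ) (v : V) :
    ∑ e : G.edgeSet, (if v ∈ (e : Sym2 V) then f e else 0) = load G f v := by
  unfold load
  rw [← Finset.sum_filter, ← Finset.sum_filter]
  symm
  refine Finset.sum_bij (fun b hb => (⟨s(v, b), by simpa using hb⟩ : G.edgeSet)) ?_ ?_ ?_ ?_
  · intro b hb; simp
  · intro b hb c hc h
    have hs : s(v, b) = s(v, c) := congrArg Subtype.val h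
    exact Sym2.congr_right.mp hs
  · rintro ⟨e, he⟩ h
    have hv : v ∈ e := by simpa using h
    obtain ⟨b, rfl⟩ := Sym2.mem_iff_exists.mp hv
    exact ⟨b, by simpa using he, rfl⟩
  · intro b hb; rfl

/-- Double counting: every edge contributes to the load of its two end vertices. -/
lemma sum_load [DecidableEq V] (G : SimpleGraph V) [DecidableRel G.Adj] (f : Sym2 V → ℝ) :
    ∑ v, load G f v = 2 * ∑ e : G.edgeSet, f e := by
  simp_rw [← sum_edges_eq_load]
  rw [Finset.sum_comm, Finset.mul_sum]
  refine Finset.sum_congr rfl fun e _ => ?_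
  obtain ⟨e, he⟩ := e
  induction e with
  | _ a b =>
    have hab : a ≠ b := G.ne_of_adj he
    rw [← Finset.sum_filter]
    have : (Finset.univ.filter fun v => v ∈ s(a, b)) = {a, b} := by
      ext v; simp
    simp only [this, Finset.sum_const, Finset.card_pair hab, nsmul_eq_mul, Nat.cast_ofNat]

/-! ### Transfer of weights along a common equitable colouring -/

/-- Weights on `G` can be averaged over colour classes and carried over to `H`, when the number
`D i j` of `j`-coloured neighbours of an `i`-coloured vertex is the same in both graphs: the load
at `u` in `H`, times the size of the colour class of `u` in `H`, is the total load in `G` of that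
colour. -/
lemma exists_averaged_weight {C : Type*} [Fintype C] [DecidableEq C]
    (G H : SimpleGraph V) [DecidableRel G.Adj] [DecidableRel H.Adj]
    (cG cH : V → C) (D : C → C → ℝ)
    (hG : ∀ a j, (∑ b, if G.Adj a b ∧ cG b = j then (1 : ℝ) else 0) = D (cG a) j)
    (hH : ∀ a j, (∑ b, if H.Adj a b ∧ cH b = j then (1 : ℝ) else 0) = D (cH a) j)
    (f : Sym2 V → ℝ) (hf : ∀ e, 0 ≤ f e) :
    ∃ g : Sym2 V → ℝ, (∀ e, 0 ≤ g e) ∧ ∀ u,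
      load H g u * (∑ v, if cH v = cH u then 1 else 0) =
        ∑ a, if cG a = cH u then load G f a else 0 := by
  set n : C → ℝ := fun i => ∑ v, if cH v = i then 1 else 0 with hn
  -- the total weight in `G` from colour `i` to colour `j`, over ordered pairs
  set w : C → C → ℝ := fun i j => ∑ a, ∑ b, if cG a = i ∧ cG b = j then
    (if G.Adj a b then f s(a, b) else 0) else 0 with hw
  have wnn : ∀ i j, 0 ≤ w i j := fun i j => Finset.sum_nonneg fun a _ =>
    Finset.sum_nonneg fun b _ => by
      have := hf s(a, b)
      split_ifs <;> simp [this]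
  have wsymm : ∀ i j, w i j = w j i := by
    intro i j
    simp only [hw]
    rw [Finset.sum_comm]
    refine Finset.sum_congr rfl fun a _ => Finset.sum_congr rfl fun b _ => ?_
    rw [Sym2.eq_swap]
    simp only [G.adj_comm b a, and_comm]
  -- the number of ordered pairs of adjacent vertices of `H` with colours `i` and `j`
  set E : C → C → ℝ := fun i j => ∑ u, ∑ v, if cH u = i ∧ cH v = j then
    (if H.Adj u v then 1 else 0) else 0 with hE
  have Enn : ∀ i j, 0 ≤ E i j := fun i j => Finset.sum_nonneg fun a _ =>
    Finset.sum_nonneg fun b _ => by split_ifs <;> simp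
  have Esymm : ∀ i j, E i j = E j i := by
    intro i j
    simp only [hE]
    rw [Finset.sum_comm]
    refine Finset.sum_congr rfl fun a _ => Finset.sum_congr rfl fun b _ => ?_
    simp only [H.adj_comm b a, and_comm]
  have En : ∀ i j, E i j = n i * D i j := by
    intro i j
    simp only [hE, hn, Finset.sum_mul]
    refine Finset.sum_congr rfl fun u _ => ?_
    by_cases hu : cH u = i
    · subst hu
      rw [← hH]
      simp only [true_and, if_true, one_mul]
      refine Finset.sum_congr rfl fun v _ => ?_
      by_cases h1 : cH v = j <;> by_cases h2 : H.Adj u v <;> simp [h1, h2]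
    · simp [hu]
  have w0 : ∀ i j, D i j = 0 → w i j = 0 := by
    intro i j h
    refine Finset.sum_eq_zero fun a _ => Finset.sum_eq_zero fun b _ => ?_
    split_ifs with h1 h2
    · exfalso
      have h3 := hG a j
      rw [h1.1, h, Finset.sum_eq_zero_iff_of_nonneg
        (fun _ _ => by split_ifs <;> simp)] at h3
      have := h3 b (Finset.mem_univ _)
      simp [h1.2, h2] at this
    · rfl
    · rfl
  have hsymm : ∀ u v, w (cH u) (cH v) / E (cH u) (cH v) = w (cH v) (cH u) / E (cH v) (cH u) :=
    fun u v => by rw [wsymm, Esymm]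
  refine ⟨Sym2.lift ⟨fun u v => w (cH u) (cH v) / E (cH u) (cH v), hsymm⟩, ?_, ?_⟩
  · intro e
    induction e with
    | _ a b => exact div_nonneg (wnn _ _) (Enn _ _)
  · intro u
    have npos : 0 < n (cH u) := by
      refine Finset.sum_pos' (fun _ _ => by split_ifs <;> simp) ⟨u, Finset.mem_univ _, by simp⟩
    have h1 : load H (Sym2.lift ⟨fun u v => w (cH u) (cH v) / E (cH u) (cH v), hsymm⟩) u =
        ∑ j, D (cH u) j * (w (cH u) j / E (cH u) j) := by
      simp only [load, Sym2.lift_mk, ← hH, Finset.sum_mul]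
      rw [Finset.sum_comm]
      refine Finset.sum_congr rfl fun v _ => ?_
      by_cases h : H.Adj u v <;> simp [h]
    have h2 : ∀ j, D (cH u) j * (w (cH u) j / E (cH u) j) * n (cH u) = w (cH u) j := by
      intro j
      by_cases h : D (cH u) j = 0
      · simp [h, w0 _ _ h]
      · rw [En]
        field_simp
    change _ * n (cH u) = _
    rw [h1, Finset.sum_mul, Finset.sum_congr rfl fun j _ => h2 j]
    simp only [hw, load]
    rw [Finset.sum_comm]
    refine Finset.sum_congr rfl fun a _ => ?_
    rw [Finset.sum_comm]
    by_cases h : cG a = cH u <;> simp [h]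

/-- The averaged weights keep the total and every uniform bound on the load. -/
lemma exists_transfer [DecidableEq V] {C : Type*} [Fintype C] [DecidableEq C]
    (G H : SimpleGraph V) [DecidableRel G.Adj] [DecidableRel H.Adj]
    (cG cH : V → C) (D : C → C → ℝ)
    (hG : ∀ a j, (∑ b, if G.Adj a b ∧ cG b = j then (1 : ℝ) else 0) = D (cG a) j)
    (hH : ∀ a j, (∑ b, if H.Adj a b ∧ cH b = j then (1 : ℝ) else 0) = D (cH a) j)
    (hc : ∀ φ : C → ℝ, ∑ a, φ (cG a) = ∑ a, φ (cH a))
    (y : G.edgeSet → ℝ) (hy : ∀ e, 0 ≤ y e) :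
    ∃ z : H.edgeSet → ℝ, (∀ e, 0 ≤ z e) ∧ (∑ e, z e = ∑ e, y e) ∧
      ((∀ v : V, ∑ e : G.edgeSet, (if v ∈ (e : Sym2 V) then y e else 0) ≤ 1) →
        ∀ v : V, ∑ e : H.edgeSet, (if v ∈ (e : Sym2 V) then z e else 0) ≤ 1) ∧
      ((∀ v : V, 1 ≤ ∑ e : G.edgeSet, (if v ∈ (e : Sym2 V) then y e else 0)) →
        ∀ v : V, 1 ≤ ∑ e : H.edgeSet, (if v ∈ (e : Sym2 V) then z e else 0)) := by
  classical
  obtain ⟨f, hf, hfy⟩ : ∃ f : Sym2 V → ℝ, (∀ e, 0 ≤ f e) ∧ ∀ e : G.edgeSet, y e = f e := by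
    refine ⟨fun e => if h : e ∈ G.edgeSet then y ⟨e, h⟩ else 0, fun e => ?_, fun e => ?_⟩
    · dsimp only
      split_ifs with h
      exacts [hy _, le_rfl]
    · simp
  obtain ⟨g, hg, hgl⟩ := exists_averaged_weight G H cG cH D hG hH f hf
  have npos : ∀ u, (0 : ℝ) < ∑ v, if cH v = cH u then 1 else 0 := fun u =>
    Finset.sum_pos' (fun _ _ => by split_ifs <;> simp) ⟨u, Finset.mem_univ _, by simp⟩
  have hcard : ∀ i, (∑ v, if cG v = i then (1 : ℝ) else 0) = ∑ v, if cH v = i then 1 else 0 :=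
    fun i => hc fun k => if k = i then 1 else 0
  refine ⟨fun e => g e, fun e => hg e, ?_, ?_, ?_⟩
  · have hsum : ∑ u, load H g u = ∑ a, load G f a := by
      set n : C → ℝ := fun i => ∑ v, if cH v = i then 1 else 0 with hn
      set R : C → ℝ := fun i => ∑ a, if cG a = i then load G f a else 0 with hR
      have h1 : ∀ u, load H g u = R (cH u) / n (cH u) := fun u => by
        rw [eq_div_iff (npos u).ne']
        exact hgl u
      have h2 : ∀ a, (n (cG a)) ≠ 0 := fun a => by
        have : (0 : ℝ) < ∑ v, if cG v = cG a then 1 else 0 :=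
          Finset.sum_pos' (fun _ _ => by split_ifs <;> simp) ⟨a, Finset.mem_univ _, by simp⟩
        rw [hcard] at this
        exact this.ne'
      calc ∑ u, load H g u = ∑ a, R (cG a) / n (cG a) := by
            rw [hc fun i => R i / n i]
            exact Finset.sum_congr rfl fun u _ => h1 u
        _ = ∑ a, ∑ b, (if cG b = cG a then load G f b / n (cG b) else 0) := by
            refine Finset.sum_congr rfl fun a _ => ?_
            simp only [hR, Finset.sum_div]
            refine Finset.sum_congr rfl fun b _ => ?_
            split_ifs with h
            · rw [h]
            · simp
        _ = ∑ b, load G f b / n (cG b) * n (cG b) := by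
            rw [Finset.sum_comm]
            refine Finset.sum_congr rfl fun b _ => ?_
            rw [show n (cG b) = ∑ v, if cG v = cG b then (1 : ℝ) else 0 from (hcard _).symm,
              Finset.mul_sum]
            refine Finset.sum_congr rfl fun a _ => ?_
            simp [eq_comm]
        _ = _ := Finset.sum_congr rfl fun b _ => div_mul_cancel₀ _ (h2 b)
    rw [sum_load, sum_load] at hsum
    simp only [hfy]
    linarith
  · intro h v
    simp only [hfy] at h
    simp only [sum_edges_eq_load] at h ⊢
    have h1 : load H g v * (∑ u, if cH u = cH v then 1 else 0) ≤
        1 * (∑ u, if cH u = cH v then 1 else 0) := by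
      rw [hgl, one_mul, ← hcard]
      refine Finset.sum_le_sum fun a _ => ?_
      split_ifs
      exacts [h a, le_rfl]
    exact le_of_mul_le_mul_right h1 (npos v)
  · intro h v
    simp only [hfy] at h
    simp only [sum_edges_eq_load] at h ⊢
    have h1 : 1 * (∑ u, if cH u = cH v then 1 else 0) ≤
        load H g v * (∑ u, if cH u = cH v then 1 else 0) := by
      rw [hgl, one_mul, ← hcard]
      refine Finset.sum_le_sum fun a _ => ?_
      split_ifs
      exacts [h a, le_rfl]
    exact le_of_mul_le_mul_right h1 (npos v)

/-! ### The colouring induced by a doubly stochastic matrix -/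

/-- If `p = S q` and `q = Sᵀ p` with `S` doubly stochastic, then `p a = q u` wherever `S a u ≠ 0`,
because `∑ S a u (p a - q u)² = ‖p‖² + ‖q‖² - 2 ⟨p, S q⟩ = 0`. -/
lemma eq_of_stochastic {S : Matrix V V ℝ} (hS : DoublyStochastic S) {p q : V → ℝ}
    (hp : ∀ a, p a = ∑ u, S a u * q u) (hq : ∀ u, q u = ∑ a, S a u * p a)
    {a u : V} (h : S a u ≠ 0) : p a = q u := by
  obtain ⟨h0, hr, hcol⟩ := hS
  have e1 : ∑ a, ∑ u, S a u * (p a * p a) = ∑ a, p a * p a :=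
    Finset.sum_congr rfl fun a _ => by rw [← Finset.sum_mul, hr, one_mul]
  have e2 : ∑ a, ∑ u, S a u * (q u * q u) = ∑ u, q u * q u := by
    rw [Finset.sum_comm]
    exact Finset.sum_congr rfl fun a _ => by rw [← Finset.sum_mul, hcol, one_mul]
  have e3 : ∑ a, ∑ u, S a u * (p a * q u) = ∑ a, p a * p a := by
    refine Finset.sum_congr rfl fun a _ => ?_
    conv_rhs => rw [hp a, Finset.sum_mul, ← hp a]
    refine Finset.sum_congr rfl fun u _ => by ring
  have e4 : ∑ a, ∑ u, S a u * (p a * q u) = ∑ u, q u * q u := by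
    rw [Finset.sum_comm]
    refine Finset.sum_congr rfl fun u _ => ?_
    conv_rhs => rw [hq u, Finset.sum_mul, ← hq u]
    refine Finset.sum_congr rfl fun u _ => by ring
  have key : ∑ a, ∑ u, S a u * (p a - q u) ^ 2 = 0 := by
    have : ∀ a u, S a u * (p a - q u) ^ 2 =
        S a u * (p a * p a) + S a u * (q u * q u) - 2 * (S a u * (p a * q u)) := by
      intros; ring
    simp only [this, Finset.sum_sub_distrib, Finset.sum_add_distrib, ← Finset.mul_sum]
    linarith
  have nn : ∀ a u, 0 ≤ S a u * (p a - q u) ^ 2 := fun a u => mul_nonneg (h0 a u) (sq_nonneg _)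
  rw [Finset.sum_eq_zero_iff_of_nonneg fun a _ => Finset.sum_nonneg fun u _ => nn a u] at key
  have k1 := key a (Finset.mem_univ _)
  rw [Finset.sum_eq_zero_iff_of_nonneg fun u _ => nn a u] at k1
  have k2 := k1 u (Finset.mem_univ _)
  have k3 := (mul_eq_zero.mp k2).resolve_left h
  exact sub_eq_zero.mp (pow_eq_zero_iff (two_ne_zero) |>.mp k3)

lemma sum_color_eq {C : Type*} {S : Matrix V V ℝ} (hS : DoublyStochastic S) {cG cH : V → C}
    (hc : ∀ a u, S a u ≠ 0 → cG a = cH u) (φ : C → ℝ) :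
    ∑ a, φ (cG a) = ∑ u, φ (cH u) := by
  calc ∑ a, φ (cG a) = ∑ a, ∑ u, S a u * φ (cG a) :=
        Finset.sum_congr rfl fun a _ => by rw [← Finset.sum_mul, hS.2.1, one_mul]
    _ = ∑ a, ∑ u, S a u * φ (cH u) := by
        refine Finset.sum_congr rfl fun a _ => Finset.sum_congr rfl fun u _ => ?_
        by_cases h : S a u = 0
        · simp [h]
        · rw [hc a u h]
    _ = _ := by
        rw [Finset.sum_comm]
        exact Finset.sum_congr rfl fun a _ => by rw [← Finset.sum_mul, hS.2.2, one_mul]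

/-- With `p`, `q` the numbers of `j`-coloured neighbours in `G` and `H`, this is the relation
`p = S q`; applied to `Sᵀ` it gives `q = Sᵀ p`. -/
lemma colorDegree_eq {C : Type*} [DecidableEq C] (G H : SimpleGraph V)
    [DecidableRel G.Adj] [DecidableRel H.Adj] {S : Matrix V V ℝ} (hr : ∀ a, ∑ u, S a u = 1)
    (hAdj : G.adjMatrix ℝ * S = S * H.adjMatrix ℝ) {cG cH : V → C}
    (hc : ∀ a u, S a u ≠ 0 → cG a = cH u) (j : C) (a : V) :
    (∑ b, if G.Adj a b ∧ cG b = j then (1 : ℝ) else 0) =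
      ∑ u, S a u * ∑ v, if H.Adj u v ∧ cH v = j then (1 : ℝ) else 0 := by
  -- `S` maps the indicator of colour `j` in `H` to the indicator of colour `j` in `G`
  have hind : S *ᵥ (fun v => if cH v = j then (1 : ℝ) else 0) =
      fun b => if cG b = j then (1 : ℝ) else 0 := by
    funext b
    calc _ = ∑ u, S b u * (if cG b = j then (1 : ℝ) else 0) := by
          refine Finset.sum_congr rfl fun u _ => ?_
          by_cases h : S b u = 0
          · simp [h]
          · rw [hc b u h]
      _ = _ := by rw [← Finset.sum_mul, hr, one_mul]
  have hdeg : ∀ (K : SimpleGraph V) [DecidableRel K.Adj] (c : V → C) (x : V),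
      (∑ b, if K.Adj x b ∧ c b = j then (1 : ℝ) else 0) =
        (K.adjMatrix ℝ *ᵥ fun b => if c b = j then (1 : ℝ) else 0) x := by
    intro K _ c x
    simp only [Matrix.mulVec, dotProduct, SimpleGraph.adjMatrix_apply]
    refine Finset.sum_congr rfl fun b _ => ?_
    by_cases h1 : K.Adj x b <;> simp [h1]
  simp only [hdeg]
  rw [← hind, Matrix.mulVec_mulVec, hAdj, ← Matrix.mulVec_mulVec]
  rfl

/-- Fractionally isomorphic graphs have a common equitable colouring. -/
lemma exists_common_coloring (G H : SimpleGraph V) [DecidableRel G.Adj] [DecidableRel H.Adj]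
    (S : Matrix V V ℝ) (hS : DoublyStochastic S)
    (hAdj : G.adjMatrix ℝ * S = S * H.adjMatrix ℝ) :
    ∃ (C : Type u) (_ : Fintype C) (_ : DecidableEq C) (cG cH : V → C) (D : C → C → ℝ),
      (∀ a j, (∑ b, if G.Adj a b ∧ cG b = j then (1 : ℝ) else 0) = D (cG a) j) ∧
      (∀ a j, (∑ b, if H.Adj a b ∧ cH b = j then (1 : ℝ) else 0) = D (cH a) j) ∧
      (∀ φ : C → ℝ, ∑ a, φ (cG a) = ∑ a, φ (cH a)) := by
  classical
  let r : V ⊕ V → V ⊕ V → Prop := fun x y => ∃ a u, x = .inl a ∧ y = .inr u ∧ S a u ≠ 0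
  let cG : V → Quot r := fun a => Quot.mk r (.inl a)
  let cH : V → Quot r := fun u => Quot.mk r (.inr u)
  have hc : ∀ a u, S a u ≠ 0 → cG a = cH u := fun a u h => Quot.sound ⟨a, u, rfl, rfl, h⟩
  have hAdjT : H.adjMatrix ℝ * Sᵀ = Sᵀ * G.adjMatrix ℝ := by
    have := congrArg Matrix.transpose hAdj
    simpa [Matrix.transpose_mul] using this.symm
  let D : Quot r → Quot r → ℝ := fun i j => Quot.lift
    (Sum.elim (fun a => ∑ b, if G.Adj a b ∧ cG b = j then (1 : ℝ) else 0)
      (fun u => ∑ v, if H.Adj u v ∧ cH v = j then (1 : ℝ) else 0))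
    (by
      rintro _ _ ⟨a, u, rfl, rfl, h⟩
      exact eq_of_stochastic hS
        (p := fun a => ∑ b, if G.Adj a b ∧ cG b = j then (1 : ℝ) else 0)
        (q := fun u => ∑ v, if H.Adj u v ∧ cH v = j then (1 : ℝ) else 0)
        (fun a => colorDegree_eq G H hS.2.1 hAdj hc j a)
        (fun u => colorDegree_eq H G (S := Sᵀ) hS.2.2 hAdjT
          (fun a u h => (hc u a h).symm) j u) h) i
  exact ⟨Quot r, Fintype.ofFinite _, inferInstance, cG, cH, D, fun _ _ => rfl, fun _ _ => rfl,
    sum_color_eq hS hc⟩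

end FracIso

/-! ### Equality of the fractional invariants -/

theorem fracIso_matching_edgeCover_eq {V : Type*} [Fintype V] [DecidableEq V]
    (G H : SimpleGraph V) [DecidableRel G.Adj] [DecidableRel H.Adj]
    (S : Matrix V V ℝ) (hS : DoublyStochastic S)
    (hAdj : G.adjMatrix ℝ * S = S * H.adjMatrix ℝ) :
    fracMatchingNumber G = fracMatchingNumber H ∧
    (fracMatchingNumber G = (Fintype.card V : ℝ) / 2 ↔
      fracMatchingNumber H = (Fintype.card V : ℝ) / 2) ∧
    ((∀ v : V, ∃ u, G.Adj v u) → fracEdgeCoverNumber G = fracEdgeCoverNumber H) := by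
  obtain ⟨C, _, _, cG, cH, D, hG, hH, hc⟩ := exists_common_coloring G H S hS hAdj
  have hM : fracMatchingNumber G = fracMatchingNumber H := by
    unfold fracMatchingNumber
    congr 1
    ext t
    constructor
    · rintro ⟨y, hy, hb, rfl⟩
      obtain ⟨z, hz, ht, h1, -⟩ := exists_transfer G H cG cH D hG hH hc y hy
      exact ⟨z, hz, h1 hb, ht.symm⟩
    · rintro ⟨y, hy, hb, rfl⟩
      obtain ⟨z, hz, ht, h1, -⟩ := exists_transfer H G cH cG D hH hG (fun φ => (hc φ).symm) y hy
      exact ⟨z, hz, h1 hb, ht.symm⟩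
  refine ⟨hM, by rw [hM], fun _ => ?_⟩
  unfold fracEdgeCoverNumber
  congr 1
  ext t
  constructor
  · rintro ⟨y, hy, hb, rfl⟩
    obtain ⟨z, hz, ht, -, h1⟩ := exists_transfer G H cG cH D hG hH hc y hy
    exact ⟨z, hz, h1 hb, ht.symm⟩
  · rintro ⟨y, hy, hb, rfl⟩
    obtain ⟨z, hz, ht, -, h1⟩ := exists_transfer H G cH cG D hH hG (fun φ => (hc φ).symm) y hy
    exact ⟨z, hz, h1 hb, ht.symm⟩
end

section
/- Let G be a simple graph on a finite vertex type V. Suppose there exist a finite index type ι and a function p : V → ι such that for every i in the range of p there is a natural number r ≥ 1 with: for every vertex v with p v = i, the number of vertices u with p u = i and G.Adj v u equals r (i.e., each class of the partition induces a regular subgraph of positive degree). Then μ_f(G) = |V|/2, i.e., G has a perfect fractional matching, where μ_f(G) is the supremum (in ℝ) of { t | ∃ y : E(G) → ℝ, (∀ e, 0 ≤ y e) ∧ (∀ v : V, the sum of y e over edges e of G containing v is ≤ 1) ∧ t = ∑ over e of y e }. -/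
/-!
Double counting incidences shows that for any edge weighting `y`, the vertex loads sum to twice the
total weight (`sum_load_eq_two_mul`). Hence a fractional matching has total weight at most
`|V| / 2`, with equality when every load is exactly `1`. Such a weighting exists: give an edge inside
a class of the partition the weight `1 / r`, where `r` is the degree of that class, and every other
edge the weight `0`. A vertex then meets exactly `r` edges of weight `1 / r`
(`sum_incident_eq_sum_adj` turns its load into a sum over neighbours).
-/

open Matrix

theorem sum_load_eq_two_mul {V : Type*} [Fintype V] [DecidableEq V]
    (G : SimpleGraph V) [DecidableRel G.Adj] (y : G.edgeSet → ℝ) :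
    ∑ v : V, ∑ e : G.edgeSet, (if v ∈ (e : Sym2 V) then y e else 0)
      = 2 * ∑ e : G.edgeSet, y e := by
  rw [Finset.sum_comm, Finset.mul_sum]
  refine Finset.sum_congr rfl fun e _ => ?_
  rw [← Finset.sum_filter, Finset.sum_const, nsmul_eq_mul]
  congr 1
  obtain ⟨e, he⟩ := e
  induction e using Sym2.ind with
  | _ a b =>
    have hab : a ≠ b := G.ne_of_adj he
    have : (Finset.univ.filter fun v : V => v ∈ s(a, b)) = {a, b} := by
      ext v; simp
    rw [this, Finset.card_pair hab]
    norm_num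

theorem sum_incident_eq_sum_adj {V : Type*} [Fintype V] [DecidableEq V]
    (G : SimpleGraph V) [DecidableRel G.Adj] (w : Sym2 V → ℝ) (v : V) :
    ∑ e : G.edgeSet, (if v ∈ (e : Sym2 V) then w e else 0)
      = ∑ u : V, if G.Adj v u then w s(v, u) else 0 := by
  rw [← Finset.sum_filter, ← Finset.sum_filter]
  symm
  refine Finset.sum_bij (fun u hu => ⟨s(v, u), (Finset.mem_filter.1 hu).2⟩) ?_ ?_ ?_ ?_
  · intro u hu
    simp
  · intro a ha b hb h
    exact Sym2.congr_right.1 (Subtype.ext_iff.1 h)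
  · rintro ⟨e, he⟩ hv
    obtain ⟨u, rfl⟩ := (Finset.mem_filter.1 hv).2
    exact ⟨u, Finset.mem_filter.2 ⟨Finset.mem_univ _, he⟩, rfl⟩
  · intro u hu
    rfl

theorem perfect_fracMatching_of_regular_partition {V : Type*} [Fintype V] [DecidableEq V]
    (G : SimpleGraph V) [DecidableRel G.Adj]
    (ι : Type*) [Fintype ι] (p : V → ι)
    (hreg : ∀ i ∈ Set.range p, ∃ r : ℕ, 1 ≤ r ∧
      ∀ v : V, p v = i → Nat.card {u : V // p u = i ∧ G.Adj v u} = r) :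
    fracMatchingNumber G = (Fintype.card V : ℝ) / 2 := by
  classical
  refine IsGreatest.csSup_eq ⟨?_, ?_⟩
  · choose! r hr1 hr using hreg
    -- `d v` is the common degree of the class of `v`.
    let d : V → ℝ := fun v => r (p v)
    have hd : ∀ v, d v ≠ 0 := fun v => by
      have := hr1 (p v) ⟨v, rfl⟩
      exact Nat.cast_ne_zero.2 (by omega)
    let w : Sym2 V → ℝ := Sym2.lift ⟨fun a b => if p a = p b then 1 / d a else 0, by
      intro a b
      by_cases h : p a = p b
      · simp [h, d]
      · simp [h, Ne.symm h]⟩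
    have hw : ∀ a b, w s(a, b) = if p a = p b then 1 / d a else 0 := fun a b => rfl
    have hload : ∀ v : V, ∑ e : G.edgeSet, (if v ∈ (e : Sym2 V) then w e else 0) = 1 := by
      intro v
      have hcard : ((Finset.univ.filter fun u => p u = p v ∧ G.Adj v u).card : ℝ) = d v := by
        rw [← Fintype.card_subtype, ← Nat.card_eq_fintype_card, hr (p v) ⟨v, rfl⟩ v rfl]
      rw [sum_incident_eq_sum_adj]
      calc ∑ u : V, (if G.Adj v u then w s(v, u) else 0)
          = ∑ u : V, if p u = p v ∧ G.Adj v u then 1 / d v else 0 := by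
            refine Finset.sum_congr rfl fun u _ => ?_
            rw [hw]
            by_cases h1 : G.Adj v u <;> by_cases h2 : p u = p v <;> simp [h1, h2, eq_comm]
            exact fun h => (h2 h.symm).elim
        _ = 1 := by
            rw [← Finset.sum_filter, Finset.sum_const, nsmul_eq_mul, hcard,
              mul_one_div_cancel (hd v)]
    refine ⟨fun e => w e, ?_, fun v => (hload v).le, ?_⟩
    · rintro ⟨e, he⟩
      induction e using Sym2.ind with
      | _ a b =>
        change 0 ≤ w s(a, b)
        rw [hw]
        split_ifs <;> positivity
    · have h := sum_load_eq_two_mul G fun e => w e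
      simp only [hload, Finset.sum_const, Finset.card_univ, nsmul_eq_mul, mul_one] at h
      linarith
  · rintro t ⟨y, -, hy, rfl⟩
    have h := sum_load_eq_two_mul G y
    have h2 := Finset.sum_le_sum fun v (_ : v ∈ Finset.univ) => hy v
    rw [h] at h2
    simp only [Finset.sum_const, Finset.card_univ, nsmul_eq_mul, mul_one] at h2
    linarith
end
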